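/- Let w ∈ K(B_n) with Neg(w) = ∅ (so w ∈ K(S_n)). Then F(Λ_w^B, q) = F(Λ_w^S, q). More precisely, if w = w_1⋯w_p ⊕ st(w_{p+1}⋯w_n) for some p ∈ [n−1], then F(Λ_w^B, q) = F(Λ_{w_1⋯w_p}^B, q) · F(Λ_{st(w_{p+1}⋯w_n)}^B, q); and if w = st(w_1⋯w_p) ⊖ w_{p+1}⋯w_n for some p ∈ [n−1], then F(Λ_w^B, q) = [n choose p]_q · F(Λ_{st(w_1⋯w_p)}^B, q) · F(Λ_{w_{p+1}⋯w_n}^B, q), where [n choose p]_q = [n]!/([p]![n−p]!) is the Gaussian binomial coefficient. -/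

import Mathlib

/-!
Everything below an unsigned `w` in the left weak order of `B_n` is unsigned, so `F(Λ_w^B)` is the
inversion generating function `genF` of the words on the alphabet `{1, …, n}` whose inversion set
is contained in `Inv(w)` (`FLamB_eq`, `FLamS_eq`). Allowing arbitrary finite alphabets `V ⊂ ℤ`,
`genF V A` depends on `V` only through its size (`genF_eq_of_card`), which encodes
standardization.

Cut a word after its first `p` letters, and let `S` be the set of those letters. The inversions are
those of the two pieces together with the pairs `s > t`, `s ∈ S`, `t ∈ V \ S`; hence `genF` is a
sum over the `p`-subsets `S` of products of the `genF` of the pieces (`genF_split`).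

* If no pair across the cut may be inverted (direct sum), only `S = {1, …, p}` survives, and
  `genF` is a product (`genF_direct`).
* If every pair across the cut may be inverted (skew sum), the sum over `S` contributes the
  factor `G = ∑_S q ^ crossInv S (V \ S)`, whatever the constraints inside the pieces. With no
  constraints at all, `genF` is `[n]!` (`genF_univ`), so `[n]! = G [p]! [n - p]!`, which identifies
  `G` without computing it (`genF_skew`).

For `w` a permutation, a decomposition `w = a ⊕ st b` (resp. `st a ⊖ b`) forces one piece to fill the
top interval of `{1, …, n}`, which gives the required inequalities between the letters (`fill`).
-/

namespace SepPaperFormal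

noncomputable section

open Polynomial

def st (a : List ℤ) : List ℤ :=
  a.map (fun x => ((a.filter (fun y => decide (y < x))).length : ℤ) + 1)

def sts (a : List ℤ) : List ℤ :=
  a.map (fun x => x.sign * (((a.filter (fun y => decide (|y| < |x|))).length : ℤ) + 1))

def IsSignedPerm (w : List ℤ) : Prop :=
  (w.map Int.natAbs).Perm (List.range' 1 w.length)

def ContainsB (w u : List ℤ) : Prop := ∃ s : List ℤ, s.Sublist w ∧ sts s = u

def ContainsA (w u : List ℤ) : Prop := ∃ s : List ℤ, s.Sublist w ∧ st s = u

def IsSepB (w : List ℤ) : Prop :=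
  IsSignedPerm w ∧
    ¬ ContainsB w [-2, 1] ∧ ¬ ContainsB w [2, -1] ∧
    ¬ ContainsB w [3, 1, 4, 2] ∧ ¬ ContainsB w [2, 4, 1, 3] ∧
    ¬ ContainsB w [-3, -1, -4, -2] ∧ ¬ ContainsB w [-2, -4, -1, -3]

def IsSepA (w : List ℤ) : Prop :=
  IsSignedPerm w ∧ (∀ x ∈ w, 0 < x) ∧
    ¬ ContainsA w [3, 1, 4, 2] ∧ ¬ ContainsA w [2, 4, 1, 3]

def oplus (u v : List ℤ) : List ℤ :=
  u ++ v.map (fun x => x + x.sign * (u.length : ℤ))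

def ominus (u v : List ℤ) : List ℤ :=
  u.map (fun x => x + x.sign * (v.length : ℤ)) ++ v

def AllSameSign (l : List ℤ) : Prop := (∀ x ∈ l, 0 < x) ∨ (∀ x ∈ l, x < 0)

def OppSign (a b : List ℤ) : Prop := ∀ x ∈ a, ∀ y ∈ b, x * y < 0

-- blocks for statement 3
def blockOf (w : List ℤ) (q : List ℕ) (i : ℕ) : List ℤ :=
  (w.drop q[i]!).take (q[i+1]! - q[i]!)

def cutSeq (w : List ℤ) (cuts : List ℕ) : List ℕ := 0 :: (cuts ++ [w.length])

def GoodDecomp (w : List ℤ) (cuts : List ℕ) : Prop :=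
  List.Chain' (· < ·) (cutSeq w cuts) ∧
  w = List.foldl oplus (blockOf w (cutSeq w cuts) 0)
        ((List.range cuts.length).map (fun i => sts (blockOf w (cutSeq w cuts) (i + 1)))) ∧
  IsSepB (blockOf w (cutSeq w cuts) 0) ∧
  (∀ i, 1 ≤ i → i ≤ cuts.length → IsSepB (sts (blockOf w (cutSeq w cuts) i))) ∧
  (∀ j, j ≤ cuts.length → AllSameSign (blockOf w (cutSeq w cuts) j)) ∧
  (∀ i, 1 ≤ i → i ≤ cuts.length →
    OppSign (blockOf w (cutSeq w cuts) (i - 1)) (blockOf w (cutSeq w cuts) i))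

-- statement 4
inductive InC : List ℤ → Prop
  | one : InC [1]
  | negone : InC [-1]
  | dsum (u v : List ℤ) : InC u → InC v → InC (oplus u v)
  | ssum (u v : List ℤ) : InC u → InC v → AllSameSign (u ++ v) → InC (ominus u v)

-- the map φₙ as a relation
inductive PhiRel : List ℤ → List ℤ → Prop
  | base : PhiRel [1] []
  | gasc (w u : List ℤ) (p : ℕ) (hp1 : 1 ≤ p) (hp2 : p < w.length)
      (h : ∀ i j, i < p → p ≤ j → j < w.length → w[i]! < w[j]!)
      (ih : PhiRel (w.take p) u) :
      PhiRel w (oplus u (st (w.drop p)))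
  | gdes (w u : List ℤ) (p : ℕ) (hp1 : 1 ≤ p) (hp2 : p < w.length)
      (h : ∀ i j, i < p → p ≤ j → j < w.length → w[j]! < w[i]!)
      (ih : PhiRel (st (w.take p)) u) :
      PhiRel w (oplus u ((w.drop p).map (fun x => x - ((w.length - p : ℕ) : ℤ) - 1)))

-- the map ψₙ as a relation
inductive PsiRel : List ℤ → List ℤ → Prop
  | base : PsiRel [] [1]
  | pos (w u : List ℤ) (p : ℕ) (hp : p < w.length)
      (hdec : w = oplus (w.take p) (sts (w.drop p)))
      (hsign : AllSameSign (w.drop p))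
      (hlast : 0 < w[w.length - 1]!)
      (ih : PsiRel (w.take p) u) :
      PsiRel w (oplus u (sts (w.drop p)))
  | neg (w u : List ℤ) (p : ℕ) (hp : p < w.length)
      (hdec : w = oplus (w.take p) (sts (w.drop p)))
      (hsign : AllSameSign (w.drop p))
      (hlast : w[w.length - 1]! < 0)
      (ih : PsiRel (w.take p) u) :
      PsiRel w (ominus u ((sts (w.drop p)).map (fun x => x + ((w.length - p : ℕ) : ℤ) + 1)))

-- descent statistics
def DesB (w : List ℤ) : Finset ℕ :=
  (Finset.range w.length).filter (fun i => (if i = 0 then (0 : ℤ) else w[i-1]!) > w[i]!)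

def DDesB (w : List ℤ) : Finset ℕ :=
  (Finset.range w.length).filter (fun i =>
    (i = 0 ∨ (if i - 1 = 0 then (0 : ℤ) else w[i-2]!) > (if i = 0 then (0 : ℤ) else w[i-1]!)) ∧
    (if i = 0 then (0 : ℤ) else w[i-1]!) > w[i]!)

def DesA (w : List ℤ) : Finset ℕ :=
  (Finset.range w.length).filter (fun i => 1 ≤ i ∧ w[i-1]! > w[i]!)

def DDesA (w : List ℤ) : Finset ℕ :=
  (Finset.range w.length).filter (fun i => 1 ≤ i ∧
    (i = 1 ∨ w[i-2]! > w[i-1]!) ∧ w[i-1]! > w[i]!)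

-- inversions, negatives, negative sum pairs (0-based index sets)
def InvF (w : List ℤ) : Finset (ℕ × ℕ) :=
  (Finset.range w.length ×ˢ Finset.range w.length).filter
    (fun p => p.1 < p.2 ∧ w[p.2]! < w[p.1]!)

def NegF (w : List ℤ) : Finset ℕ :=
  (Finset.range w.length).filter (fun i => w[i]! < 0)

def NspF (w : List ℤ) : Finset (ℕ × ℕ) :=
  (Finset.range w.length ×ˢ Finset.range w.length).filter
    (fun p => p.1 < p.2 ∧ w[p.1]! + w[p.2]! < 0)

/-- Left weak order on `S_n` (combinatorial characterization). -/
def leS (u v : List ℤ) : Prop := InvF u ⊆ InvF v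

/-- Left weak order on `B_n` (combinatorial characterization). -/
def leB (u v : List ℤ) : Prop := InvF u ⊆ InvF v ∧ NegF u ⊆ NegF v ∧ NspF u ⊆ NspF v

/-- Coxeter length in type `B`. -/
def lenB (w : List ℤ) : ℕ := (NegF w).card + (InvF w).card + (NspF w).card

/-- Coxeter length in type `A`. -/
def lenS (w : List ℤ) : ℕ := (InvF w).card

def IsPermW (w : List ℤ) : Prop := IsSignedPerm w ∧ ∀ x ∈ w, 0 < x

/-- Rank generating function of the principal lower ideal `Λ_w^B`. -/
def FLamB (w : List ℤ) : Polynomial ℚ :=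
  ∑ᶠ u ∈ {u : List ℤ | u.length = w.length ∧ IsSignedPerm u ∧ leB u w},
    (X : Polynomial ℚ) ^ lenB u

/-- Rank generating function of the principal upper ideal `V_w^B`. -/
def FVB (w : List ℤ) : Polynomial ℚ :=
  ∑ᶠ u ∈ {u : List ℤ | u.length = w.length ∧ IsSignedPerm u ∧ leB w u},
    (X : Polynomial ℚ) ^ lenB u

/-- Rank generating function of the principal lower ideal `Λ_w^S`. -/
def FLamS (w : List ℤ) : Polynomial ℚ :=
  ∑ᶠ u ∈ {u : List ℤ | u.length = w.length ∧ IsPermW u ∧ leS u w},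
    (X : Polynomial ℚ) ^ lenS u

/-- Rank generating function of the principal upper ideal `V_w^S`. -/
def FVS (w : List ℤ) : Polynomial ℚ :=
  ∑ᶠ u ∈ {u : List ℤ | u.length = w.length ∧ IsPermW u ∧ leS w u},
    (X : Polynomial ℚ) ^ lenS u

/-- `[i] = 1 + q + ⋯ + q^{i-1}`. -/
def qint (i : ℕ) : Polynomial ℚ := ∑ j ∈ Finset.range i, (X : Polynomial ℚ) ^ j

/-- `[m]! = [1][2]⋯[m]`. -/
def qfact (m : ℕ) : Polynomial ℚ := ∏ i ∈ Finset.range m, qint (i + 1)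

-- separating trees
inductive STree where
  | leaf : STree
  | node : Bool → STree → STree → STree

def numLeaves : STree → ℕ
  | .leaf => 1
  | .node _ l r => numLeaves l + numLeaves r

def Decomp (w : List ℤ) (p : ℕ) : Prop :=
  (w = oplus (w.take p) (sts (w.drop p)) ∧ IsSepB (w.take p) ∧ IsSepB (sts (w.drop p)) ∧
    AllSameSign (w.drop p)) ∨
  (w = ominus (sts (w.take p)) (w.drop p) ∧ IsSepB (sts (w.take p)) ∧ IsSepB (w.drop p) ∧
    AllSameSign (w.drop p))

/-- `IsSepTree w T`: `T` is the (shape of the) separating tree of the separable signed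
permutation `w`, where internal nodes labeled `true` are `⊕`-nodes and those labeled
`false` are `⊖`-nodes, and the separating index is chosen largest possible. -/
inductive IsSepTree : List ℤ → STree → Prop
  | leaf (x : ℤ) : IsSepTree [x] .leaf
  | nodeA (w : List ℤ) (p : ℕ) (l r : STree)
      (hp1 : 1 ≤ p) (hp2 : p < w.length)
      (hmax : ∀ q, p < q → q < w.length → ¬ Decomp w q)
      (hdec : w = oplus (w.take p) (sts (w.drop p)))
      (h1 : IsSepB (w.take p)) (h2 : IsSepB (sts (w.drop p)))
      (hsgn : AllSameSign (w.drop p))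
      (hl : IsSepTree (w.take p) l) (hr : IsSepTree (sts (w.drop p)) r) :
      IsSepTree w (.node (decide (w[p-1]! < w[p]!)) l r)
  | nodeB (w : List ℤ) (p : ℕ) (l r : STree)
      (hp1 : 1 ≤ p) (hp2 : p < w.length)
      (hmax : ∀ q, p < q → q < w.length → ¬ Decomp w q)
      (hdec : w = ominus (sts (w.take p)) (w.drop p))
      (h1 : IsSepB (sts (w.take p))) (h2 : IsSepB (w.drop p))
      (hsgn : AllSameSign (w.drop p))
      (hl : IsSepTree (sts (w.take p)) l) (hr : IsSepTree (w.drop p) r) :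
      IsSepTree w (.node (decide (w[p-1]! < w[p]!)) l r)

/-- Multiset of leaf-counts `N(V)` over internal `⊕`-nodes `V` whose parent is a
`⊖`-node (the root, whose parent label is `none`, is excluded): the set `S⁺(w)`. -/
def plusNodes : STree → Option Bool → Multiset ℕ
  | .leaf, _ => 0
  | .node b l r, parent =>
      (if b = true ∧ parent = some false then ({numLeaves (.node b l r)} : Multiset ℕ) else 0)
        + plusNodes l (some b) + plusNodes r (some b)

/-- Multiset of leaf-counts `N(V)` over internal `⊖`-nodes `V` whose parent is a
`⊕`-node (root excluded): the set `S⁻(w)`. -/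
def minusNodes : STree → Option Bool → Multiset ℕ
  | .leaf, _ => 0
  | .node b l r, parent =>
      (if b = false ∧ parent = some true then ({numLeaves (.node b l r)} : Multiset ℕ) else 0)
        + minusNodes l (some b) + minusNodes r (some b)

/-- `∏_{m ∈ s} [m]!`. -/
def qfactProd (s : Multiset ℕ) : Polynomial ℚ := (s.map qfact).prod


/-! ### Words on a finite alphabet and their inversions -/

/-- Number of pairs `(s, t) ∈ S × T` with `t < s`: the inversions between a word with
letters `S` and a subsequent word with letters `T`. -/
def crossInv (S T : Finset ℤ) : ℕ := ((S ×ˢ T).filter (fun x => x.2 < x.1)).card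

/-- The words using each letter of `V` exactly once. -/
def wordsOn (V : Finset ℤ) : Finset (List ℤ) := V.val.lists.toFinset

open Classical in
/-- Inversion generating function of the words `u` using each letter of `V` exactly once whose
inversion set (of position pairs) is contained in `A`. -/
def genF (V : Finset ℤ) (A : Set (ℕ × ℕ)) : ℚ[X] :=
  ∑ u ∈ wordsOn V, if (InvF u : Set (ℕ × ℕ)) ⊆ A then X ^ (InvF u).card else 0

lemma mem_wordsOn {V : Finset ℤ} {u : List ℤ} :
    u ∈ wordsOn V ↔ u.Nodup ∧ u.toFinset = V := by
  rw [wordsOn, Multiset.mem_toFinset, Multiset.mem_lists_iff]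
  constructor
  · intro h
    have h1 : u.Nodup := by
      have := V.nodup
      rw [h] at this
      exact this
    refine ⟨h1, ?_⟩
    apply Finset.eq_of_veq
    rw [List.toFinset_val, h1.dedup, h]
    rfl
  · rintro ⟨h1, rfl⟩
    rw [List.toFinset_val, h1.dedup]
    rfl

lemma length_of_mem {V : Finset ℤ} {u : List ℤ} (h : u ∈ wordsOn V) : u.length = V.card := by
  obtain ⟨h1, rfl⟩ := mem_wordsOn.1 h
  rw [List.toFinset_card_of_nodup h1]

lemma mem_InvF {u : List ℤ} {i j : ℕ} :
    (i, j) ∈ InvF u ↔ i < j ∧ j < u.length ∧ u[j]! < u[i]! := by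
  simp only [InvF, Finset.mem_filter, Finset.mem_product, Finset.mem_range]
  constructor
  · rintro ⟨⟨_, h⟩, h1, h2⟩; exact ⟨h1, h, h2⟩
  · rintro ⟨h1, h, h2⟩; exact ⟨⟨by omega, h⟩, h1, h2⟩

lemma getElem!_mem' {u : List ℤ} {i : ℕ} (h : i < u.length) : u[i]! ∈ u := by
  rw [getElem!_pos u i h]; exact List.getElem_mem h

lemma append_left' {a b : List ℤ} {i : ℕ} (h : i < a.length) : (a ++ b)[i]! = a[i]! := by
  simp [List.getElem!_eq_getElem?_getD, List.getElem?_append_left h]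

lemma append_right' {a b : List ℤ} {i : ℕ} : (a ++ b)[i + a.length]! = b[i]! := by
  simp [List.getElem!_eq_getElem?_getD, List.getElem?_append_right]

lemma map' {a : List ℤ} {i : ℕ} (f : ℤ → ℤ) (h : i < a.length) : (a.map f)[i]! = f a[i]! := by
  rw [getElem!_pos _ i (by simpa using h), getElem!_pos a i h]; simp

lemma InvF_map {u : List ℤ} {f : ℤ → ℤ} (h : ∀ x ∈ u, ∀ y ∈ u, (f x < f y ↔ x < y)) :
    InvF (u.map f) = InvF u := by
  ext ⟨i, j⟩
  rw [mem_InvF, mem_InvF, List.length_map]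
  refine and_congr_right fun h1 => and_congr_right fun h2 => ?_
  rw [map' f h2, map' f (h1.trans h2)]
  exact h _ (getElem!_mem' h2) _ (getElem!_mem' (h1.trans h2))

/-- `st` replaces each letter by its rank, which is strictly monotone on the letters present. -/
lemma InvF_st (a : List ℤ) : InvF (st a) = InvF a := by
  unfold st
  apply InvF_map
  have key : ∀ x ∈ a, ∀ y, x < y →
      (a.filter (fun z => decide (z < x))).length < (a.filter (fun z => decide (z < y))).length := by
    intro x hx y hxy
    have hle : (a.filter (fun z => decide (z < x))).Sublist (a.filter (fun z => decide (z < y))) := by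
      apply List.monotone_filter_right
      intro z hz
      simp only [decide_eq_true_eq] at *
      omega
    refine lt_of_le_of_ne hle.length_le fun he => ?_
    have := hle.eq_of_length he
    have hm : x ∈ a.filter (fun z => decide (z < y)) := by simp [hx, hxy]
    rw [← this] at hm
    simp at hm
  intro x hx y hy
  constructor
  · intro h
    by_contra hc
    rcases (not_lt.1 hc).lt_or_eq with h1 | h1
    · have := key y hy x h1
      omega
    · subst h1; omega
  · intro h
    have := key x hx y h
    omega

lemma crossInv_card {a b : List ℤ} (ha : a.Nodup) (hb : b.Nodup) :
    crossInv a.toFinset b.toFinset =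
      ((Finset.range a.length ×ˢ Finset.range b.length).filter
        (fun x => b[x.2]! < a[x.1]!)).card := by
  unfold crossInv
  symm
  refine Finset.card_nbij (fun x => (a[x.1]!, b[x.2]!)) ?_ ?_ ?_
  · rintro ⟨i, j⟩ h
    simp only [Finset.coe_filter, Finset.mem_product, Finset.mem_range, Set.mem_ofPred_eq,
      List.mem_toFinset] at h ⊢
    exact ⟨⟨getElem!_mem' h.1.1, getElem!_mem' h.1.2⟩, h.2⟩
  · rintro ⟨i, j⟩ h ⟨k, l⟩ h' he
    simp only [Finset.coe_filter, Finset.mem_product, Finset.mem_range, Set.mem_ofPred_eq] at h h'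
    simp only [Prod.mk.injEq] at he
    obtain ⟨⟨hi, hj⟩, -⟩ := h
    obtain ⟨⟨hk, hl⟩, -⟩ := h'
    rw [getElem!_pos a i hi, getElem!_pos a k hk, getElem!_pos b j hj,
      getElem!_pos b l hl, ha.getElem_inj_iff, hb.getElem_inj_iff] at he
    exact Prod.ext he.1 he.2
  · rintro ⟨x, y⟩ h
    simp only [Finset.coe_filter, Finset.mem_product, Set.mem_ofPred_eq, List.mem_toFinset] at h
    obtain ⟨i, hi, hi'⟩ := List.mem_iff_getElem.1 h.1.1
    obtain ⟨j, hj, hj'⟩ := List.mem_iff_getElem.1 h.1.2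
    refine ⟨(i, j), ?_, ?_⟩
    · simp only [Finset.coe_filter, Finset.mem_product, Finset.mem_range, Set.mem_ofPred_eq]
      rw [getElem!_pos a i hi, getElem!_pos b j hj, hi', hj']
      exact ⟨⟨hi, hj⟩, h.2⟩
    · simp only
      rw [getElem!_pos a i hi, getElem!_pos b j hj, hi', hj']

/-- Inversions of a concatenation: those of the left word, the shifted ones of the right word, and
the pairs with one position in each. -/
lemma InvF_append (a b : List ℤ) :
    InvF (a ++ b) = (InvF a ∪ (InvF b).image (fun x => (x.1 + a.length, x.2 + a.length))) ∪
      ((Finset.range a.length ×ˢ Finset.range b.length).filter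
        (fun x => b[x.2]! < a[x.1]!)).image (fun x => (x.1, x.2 + a.length)) := by
  ext ⟨i, j⟩
  simp only [Finset.mem_union, Finset.mem_image, Finset.mem_filter, Finset.mem_product,
    Finset.mem_range, Prod.exists, Prod.mk.injEq, mem_InvF, List.length_append]
  constructor
  · rintro ⟨h1, h2, h3⟩
    by_cases hj : j < a.length
    · rw [append_left' hj, append_left' (h1.trans hj)] at h3
      exact Or.inl (Or.inl ⟨h1, hj, h3⟩)
    · obtain ⟨j, rfl⟩ := Nat.exists_eq_add_of_le' (not_lt.1 hj)
      rw [append_right'] at h3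
      by_cases hi : i < a.length
      · rw [append_left' hi] at h3
        exact Or.inr ⟨i, j, ⟨⟨hi, by omega⟩, h3⟩, rfl, rfl⟩
      · obtain ⟨i, rfl⟩ := Nat.exists_eq_add_of_le' (not_lt.1 hi)
        rw [append_right'] at h3
        exact Or.inl (Or.inr ⟨i, j, ⟨by omega, by omega, h3⟩, rfl, rfl⟩)
  · rintro ((⟨h1, h2, h3⟩ | ⟨i, j, ⟨h1, h2, h3⟩, rfl, rfl⟩) | ⟨i, j, ⟨⟨h1, h2⟩, h3⟩, rfl, rfl⟩)
    · rw [append_left' h2, append_left' (h1.trans h2)]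
      exact ⟨h1, by omega, h3⟩
    · rw [append_right', append_right']
      exact ⟨by omega, by omega, h3⟩
    · rw [append_right', append_left' h1]
      exact ⟨by omega, by omega, h3⟩

lemma card_InvF_append {a b : List ℤ} (ha : a.Nodup) (hb : b.Nodup) :
    (InvF (a ++ b)).card =
      crossInv a.toFinset b.toFinset + (InvF a).card + (InvF b).card := by
  rw [InvF_append, Finset.card_union_of_disjoint, Finset.card_union_of_disjoint,
    Finset.card_image_of_injective, Finset.card_image_of_injective, ← crossInv_card ha hb]
  · omega
  · rintro ⟨i, j⟩ ⟨k, l⟩ h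
    simpa using h
  · rintro ⟨i, j⟩ ⟨k, l⟩ h
    simpa using h
  · rw [Finset.disjoint_left]
    rintro ⟨i, j⟩ h h'
    simp only [Finset.mem_image, Prod.exists, Prod.mk.injEq] at h'
    obtain ⟨k, l, -, rfl, rfl⟩ := h'
    have := (mem_InvF.1 h).2.1
    omega
  · rw [Finset.disjoint_left]
    rintro ⟨i, j⟩ h h'
    simp only [Finset.mem_union, Finset.mem_image, Finset.mem_filter, Finset.mem_product,
      Finset.mem_range, Prod.exists, Prod.mk.injEq, mem_InvF] at h h'
    obtain ⟨k, l, h1, rfl, rfl⟩ := h'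
    rcases h with h | ⟨i, j, -, h2, -⟩ <;> omega

/-! ### Cutting words in two -/

/-- Cutting words after `p` letters: choose the set `S` of the first `p` letters, then the two
pieces independently. -/
lemma sum_words_split (V : Finset ℤ) (p : ℕ) (hp : p ≤ V.card) (g : List ℤ → ℚ[X]) :
    ∑ u ∈ wordsOn V, g u =
      ∑ S ∈ V.powersetCard p, ∑ x ∈ wordsOn S ×ˢ wordsOn (V \ S), g (x.1 ++ x.2) := by
  rw [Finset.sum_sigma']
  refine Finset.sum_bij' (fun u _ => ⟨(u.take p).toFinset, (u.take p, u.drop p)⟩)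
    (fun x _ => x.2.1 ++ x.2.2) ?_ ?_ ?_ ?_ ?_
  · intro u hu
    have hl := length_of_mem hu
    obtain ⟨h1, rfl⟩ := mem_wordsOn.1 hu
    have h2 : (u.take p ++ u.drop p).Nodup := by rwa [List.take_append_drop]
    have hd := List.disjoint_of_nodup_append h2
    simp only [Finset.mem_sigma, Finset.mem_powersetCard, Finset.mem_product, mem_wordsOn]
    refine ⟨⟨?_, ?_⟩, ⟨h2.of_append_left, trivial⟩, h2.of_append_right, ?_⟩
    · intro x hx
      simp only [List.mem_toFinset] at *
      exact List.mem_of_mem_take hx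
    · rw [List.toFinset_card_of_nodup h2.of_append_left, List.length_take]; omega
    · ext x
      have : x ∈ u ↔ x ∈ u.take p ∨ x ∈ u.drop p := by
        rw [← List.mem_append, List.take_append_drop]
      simp only [Finset.mem_sdiff, List.mem_toFinset, this]
      have := @hd x
      tauto
  · rintro ⟨S, a, b⟩ h
    simp only [Finset.mem_sigma, Finset.mem_powersetCard, Finset.mem_product, mem_wordsOn] at h ⊢
    obtain ⟨⟨h1, -⟩, ⟨h3, h4⟩, h5, h6⟩ := h
    refine ⟨List.nodup_append.2 ⟨h3, h5, ?_⟩, ?_⟩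
    · intro x hx y hy hxy
      subst hxy
      rw [← List.mem_toFinset, h4] at hx
      rw [← List.mem_toFinset, h6] at hy
      exact (Finset.mem_sdiff.1 hy).2 hx
    · rw [List.toFinset_append, h4, h6, Finset.union_sdiff_of_subset h1]
  · intro u _; simp
  · rintro ⟨S, a, b⟩ h
    simp only [Finset.mem_sigma, Finset.mem_powersetCard, Finset.mem_product] at h
    have hl := length_of_mem h.2.1
    rw [h.1.2] at hl
    have := (mem_wordsOn.1 h.2.1).2
    subst hl
    simp [this]
  · intro u _; simp

open Classical in
/-- Factorization of `genF` along a cut at `p`, when the constraint `A` either allows every pair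
separated by the cut (`c` true) or none of them (`c` false). -/
lemma genF_split (V : Finset ℤ) (p : ℕ) (hp : p ≤ V.card) (A : Set (ℕ × ℕ)) (c : Prop)
    (hA : ∀ i j, i < p → p ≤ j → j < V.card → ((i, j) ∈ A ↔ c)) :
    genF V A = ∑ S ∈ V.powersetCard p,
      (if c ∨ crossInv S (V \ S) = 0 then X ^ crossInv S (V \ S) else 0) *
        (genF S A * genF (V \ S) {x | (x.1 + p, x.2 + p) ∈ A}) := by
  unfold genF
  rw [sum_words_split V p hp]
  refine Finset.sum_congr rfl fun S hS => ?_
  rw [Finset.sum_mul_sum, ← Finset.sum_product', Finset.mul_sum]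
  refine Finset.sum_congr rfl ?_
  rintro ⟨a, b⟩ h
  rw [Finset.mem_product] at h
  obtain ⟨h1, h2⟩ := h
  have hla := length_of_mem h1
  have hlb := length_of_mem h2
  rw [Finset.mem_powersetCard] at hS
  rw [Finset.card_sdiff_of_subset hS.1, hS.2] at hlb
  rw [hS.2] at hla
  simp only at h1 h2 hla hlb ⊢
  rw [mem_wordsOn] at h1 h2
  have hcard := card_InvF_append h1.1 h2.1
  have hcr := crossInv_card h1.1 h2.1
  rw [h1.2, h2.2] at hcard hcr
  have hiff : ((InvF (a ++ b) : Set (ℕ × ℕ)) ⊆ A) ↔ (c ∨ crossInv S (V \ S) = 0) ∧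
      ((InvF a : Set (ℕ × ℕ)) ⊆ A) ∧
      ((InvF b : Set (ℕ × ℕ)) ⊆ {x | (x.1 + p, x.2 + p) ∈ A}) := by
    rw [InvF_append, Finset.coe_union, Finset.coe_union, Set.union_subset_iff,
      Set.union_subset_iff, and_comm, hla]
    refine and_congr ?_ (and_congr Iff.rfl (by rw [Finset.coe_image, Set.image_subset_iff]; rfl))
    rw [hcr, Finset.card_eq_zero, Finset.coe_image, Set.image_subset_iff, ← hla]
    constructor
    · intro h
      by_contra! hc
      obtain ⟨⟨i, j⟩, hij⟩ := hc.2
      have := h hij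
      simp only [Finset.mem_filter, Finset.mem_product, Finset.mem_range] at hij
      exact hc.1 ((hA _ _ (by omega) (by omega) (by omega)).1 this)
    · rintro (hc | hc)
      · rintro ⟨i, j⟩ hij
        simp only [Finset.coe_filter, Finset.mem_product, Finset.mem_range,
          Set.mem_ofPred_eq] at hij
        exact (hA _ _ (by omega) (by omega) (by omega)).2 hc
      · rw [hc]; simp
  simp only [hiff, hcard]
  by_cases q1 : c ∨ crossInv S (V \ S) = 0 <;> by_cases q2 : (InvF a : Set (ℕ × ℕ)) ⊆ A <;>
    by_cases q3 : (InvF b : Set (ℕ × ℕ)) ⊆ {x | (x.1 + p, x.2 + p) ∈ A} <;>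
    simp only [q1, q2, q3, and_self, and_true, and_false, if_true, if_false, mul_zero,
      zero_mul]
  ring

/-! ### Standardization and the unconstrained sum -/

/-- Only position pairs inside the word matter. -/
lemma genF_congr {V : Finset ℤ} {A B : Set (ℕ × ℕ)}
    (h : ∀ i j, i < j → j < V.card → ((i, j) ∈ A ↔ (i, j) ∈ B)) : genF V A = genF V B := by
  unfold genF
  refine Finset.sum_congr rfl fun u hu => ?_
  have hl := length_of_mem hu
  congr 1
  apply propext
  constructor <;>
  · rintro h' ⟨i, j⟩ hij
    have h1 := mem_InvF.1 (Finset.mem_coe.1 hij)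
    have h2 := h i j h1.1 (by omega)
    have h3 := h' hij
    tauto

lemma genF_image {V : Finset ℤ} {f : ℤ → ℤ} (hf : StrictMonoOn f V) (A : Set (ℕ × ℕ)) :
    genF V A = genF (V.image f) A := by
  unfold genF
  refine Finset.sum_nbij (fun u => u.map f) ?_ ?_ ?_ ?_
  · intro u hu
    rw [mem_wordsOn] at hu ⊢
    obtain ⟨h1, rfl⟩ := hu
    refine ⟨h1.map_on fun x hx y hy h => hf.injOn (by simpa using hx) (by simpa using hy) h, ?_⟩
    ext x; simp
  · intro u hu v hv h
    obtain ⟨-, hu⟩ := mem_wordsOn.1 (Finset.mem_coe.1 hu)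
    obtain ⟨-, hv⟩ := mem_wordsOn.1 (Finset.mem_coe.1 hv)
    have hg : ∀ x : List ℤ, x.toFinset = V → (x.map f).map (Function.invFunOn f V) = x := by
      intro x hx
      rw [List.map_map]
      conv_rhs => rw [← List.map_id x]
      refine List.map_congr_left fun y hy => hf.injOn.leftInvOn_invFunOn ?_
      rw [← hx]
      simpa using hy
    rw [← hg u hu, ← hg v hv]
    exact congrArg _ h
  · intro u hu
    obtain ⟨h1, h2⟩ := mem_wordsOn.1 (Finset.mem_coe.1 hu)
    have hg : ∀ x ∈ u, Function.invFunOn f V x ∈ V ∧ f (Function.invFunOn f V x) = x := by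
      intro x hx
      rw [← List.mem_toFinset, h2, Finset.mem_image] at hx
      exact Function.invFunOn_pos hx
    have hm : (u.map (Function.invFunOn f V)).map f = u := by
      rw [List.map_map]
      conv_rhs => rw [← List.map_id u]
      exact List.map_congr_left fun x hx => (hg x hx).2
    refine ⟨u.map (Function.invFunOn f V), Finset.mem_coe.2 (mem_wordsOn.2 ⟨?_, ?_⟩), hm⟩
    · apply List.Nodup.of_map f
      rwa [hm]
    · apply Finset.eq_of_subset_of_card_le
      · intro y hy
        simp only [List.mem_toFinset, List.mem_map] at hy
        obtain ⟨x, hx, rfl⟩ := hy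
        exact (hg x hx).1
      · have h3 : (u.map (Function.invFunOn f V)).Nodup := List.Nodup.of_map f (by rwa [hm])
        rw [List.toFinset_card_of_nodup h3, List.length_map, ← List.toFinset_card_of_nodup h1, h2,
          Finset.card_image_of_injOn hf.injOn]
  · intro u hu
    obtain ⟨-, rfl⟩ := mem_wordsOn.1 hu
    rw [InvF_map]
    intro x hx y hy
    exact hf.lt_iff_lt (by simpa using hx) (by simpa using hy)

/-- The rank function of a finite set maps it bijectively onto `{0, …, #V - 1}`. -/
lemma image_rank (V : Finset ℤ) :
    StrictMonoOn (fun x => (V.filter (· < x)).card) V ∧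
      V.image (fun x => (V.filter (· < x)).card) = Finset.range V.card := by
  have hm : StrictMonoOn (fun x => (V.filter (· < x)).card) (V : Set ℤ) := by
    intro x hx y _ hxy
    apply Finset.card_lt_card
    rw [Finset.ssubset_iff_of_subset]
    · exact ⟨x, by simpa using ⟨hx, hxy⟩, by simp⟩
    · intro z hz
      simp only [Finset.mem_filter] at *
      exact ⟨hz.1, hz.2.trans hxy⟩
  refine ⟨hm, Finset.eq_of_subset_of_card_le ?_ ?_⟩
  · intro k hk
    obtain ⟨x, hx, rfl⟩ := Finset.mem_image.1 hk
    rw [Finset.mem_range]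
    apply Finset.card_lt_card
    rw [Finset.ssubset_iff_of_subset (Finset.filter_subset _ _)]
    exact ⟨x, hx, by simp⟩
  · rw [Finset.card_image_of_injOn hm.injOn, Finset.card_range]

/-- Standardization: `genF` sees only the size of the alphabet. -/
lemma genF_eq_of_card {V W : Finset ℤ} (h : V.card = W.card) (A : Set (ℕ × ℕ)) :
    genF V A = genF W A := by
  have key : ∀ U : Finset ℤ, genF U A = genF ((Finset.range U.card).image (Nat.cast : ℕ → ℤ)) A := by
    intro U
    rw [← (image_rank U).2, Finset.image_image]
    apply genF_image
    intro x hx y hy hxy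
    exact Nat.cast_lt.2 ((image_rank U).1 hx hy hxy)
  rw [key V, key W, h]

/-- MacMahon: the inversion generating function of all permutations is `[n]!`. -/
lemma genF_univ (V : Finset ℤ) : genF V Set.univ = qfact V.card := by
  induction hn : V.card generalizing V with
  | zero =>
    rw [Finset.card_eq_zero] at hn
    subst hn
    have : wordsOn ∅ = {[]} := by
      ext u; rw [mem_wordsOn]
      simp only [List.toFinset_eq_empty_iff, Finset.mem_singleton]
      constructor
      · exact fun h => h.2
      · rintro rfl; simp
    simp [genF, this, InvF, qfact]
  | succ n ih =>
    rw [genF_split V 1 (by omega) Set.univ True (by simp), Finset.powersetCard_one,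
      Finset.sum_map]
    have h1 : genF {0} Set.univ = 1 := by
      have : wordsOn {0} = {[0]} := by
        ext u
        rw [mem_wordsOn, Finset.mem_singleton]
        constructor
        · rintro ⟨h1, h2⟩
          have h3 := List.toFinset_card_of_nodup h1
          rw [h2, Finset.card_singleton] at h3
          obtain ⟨a, rfl⟩ := List.length_eq_one_iff.1 h3.symm
          simpa using h2
        · rintro rfl; simp
      have h2 : InvF [0] = ∅ := by
        ext ⟨i, j⟩; rw [mem_InvF]; simp
      simp [genF, this, h2]
    have h2 : ∀ x ∈ V, (if True ∨ crossInv {x} (V \ {x}) = 0 then (X : ℚ[X]) ^ crossInv {x} (V \ {x})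
        else 0) * (genF {x} Set.univ * genF (V \ {x}) {y | (y.1 + 1, y.2 + 1) ∈ Set.univ}) =
        X ^ (V.filter (· < x)).card * qfact n := by
      intro x hx
      have e1 : genF {x} Set.univ = 1 := by rw [← h1]; exact genF_eq_of_card (by simp) _
      have e2 : (V \ {x}).card = n := by
        rw [Finset.card_sdiff_of_subset (by simpa using hx)]; simp; omega
      have e3 : crossInv {x} (V \ {x}) = (V.filter (· < x)).card := by
        unfold crossInv
        refine Finset.card_nbij (fun y => y.2) ?_ ?_ ?_
        · rintro ⟨a, b⟩ h
          simp only [Finset.mem_product, Finset.mem_singleton, Finset.mem_sdiff,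
            Finset.coe_filter, Set.mem_ofPred_eq] at h ⊢
          obtain ⟨⟨rfl, h⟩, h'⟩ := h
          exact ⟨h.1, h'⟩
        · rintro ⟨a, b⟩ h ⟨c, d⟩ h' he
          simp only [Finset.coe_filter, Finset.mem_product, Finset.mem_singleton,
            Set.mem_ofPred_eq] at h h' he
          rw [h.1.1, h'.1.1, he]
        · intro y hy
          simp at hy
          exact ⟨(x, y), by simp [hy]; omega, rfl⟩
      have e4 := ih (V \ {x}) e2
      simp only [true_or, if_true, Set.mem_univ, Set.ofPred_true, e1, e3, e4, one_mul]
    simp only [Function.Embedding.coeFn_mk]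
    have h3 : qfact (n + 1) = qint (n + 1) * qfact n := by
      rw [qfact, Finset.prod_range_succ, mul_comm, ← qfact]
    rw [Finset.sum_congr rfl h2, ← Finset.sum_mul, h3]
    congr 1
    rw [qint, ← hn, ← (image_rank V).2, Finset.sum_image (image_rank V).1.injOn]

/-! ### Ideals below unsigned permutations -/

lemma nonneg_iff {w : List ℤ} : NegF w = ∅ ↔ ∀ x ∈ w, 0 ≤ x := by
  rw [NegF, Finset.filter_eq_empty_iff]
  constructor
  · intro h x hx
    obtain ⟨i, hi, rfl⟩ := List.mem_iff_getElem.1 hx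
    have := h (Finset.mem_range.2 hi)
    rwa [getElem!_pos w i hi, not_lt] at this
  · intro h i hi
    rw [not_lt]
    exact h _ (getElem!_mem' (Finset.mem_range.1 hi))

lemma NspF_eq_empty {w : List ℤ} (h : ∀ x ∈ w, 0 ≤ x) : NspF w = ∅ := by
  rw [NspF, Finset.filter_eq_empty_iff]
  rintro ⟨i, j⟩ hij
  rw [Finset.mem_product, Finset.mem_range, Finset.mem_range] at hij
  have h1 := h _ (getElem!_mem' hij.1)
  have h2 := h _ (getElem!_mem' hij.2)
  simp only at h1 h2 ⊢
  omega

lemma isSignedPerm_iff {u : List ℤ} (h0 : ∀ x ∈ u, 0 ≤ x) :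
    IsSignedPerm u ↔ u ∈ wordsOn (Finset.Icc 1 (u.length : ℤ)) := by
  rw [mem_wordsOn, IsSignedPerm]
  constructor
  · intro h
    have hn : u.Nodup := List.Nodup.of_map _ (h.nodup_iff.2 List.nodup_range')
    refine ⟨hn, Finset.eq_of_subset_of_card_le ?_ ?_⟩
    · intro x hx
      rw [List.mem_toFinset] at hx
      have h1 := h.mem_iff.1 (List.mem_map_of_mem (f := Int.natAbs) hx)
      rw [List.mem_range'_1] at h1
      have := h0 x hx
      rw [Finset.mem_Icc]
      omega
    · rw [List.toFinset_card_of_nodup hn]; simp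
  · rintro ⟨hn, h⟩
    have hm : ∀ x, x ∈ u ↔ 1 ≤ x ∧ x ≤ (u.length : ℤ) := by
      intro x; rw [← List.mem_toFinset, h, Finset.mem_Icc]
    rw [List.perm_ext_iff_of_nodup _ List.nodup_range']
    · intro k
      rw [List.mem_range'_1, List.mem_map]
      constructor
      · rintro ⟨x, hx, rfl⟩
        have := (hm x).1 hx
        omega
      · intro hk
        exact ⟨k, (hm _).2 (by omega), by simp⟩
    · refine hn.map_on fun x hx y hy hxy => ?_
      have := h0 x hx
      have := h0 y hy
      omega

open Classical in
lemma genF_eq_filter (V : Finset ℤ) (A : Set (ℕ × ℕ)) :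
    genF V A = ∑ u ∈ (wordsOn V).filter (fun u => (InvF u : Set (ℕ × ℕ)) ⊆ A),
      X ^ (InvF u).card := by
  rw [genF, Finset.sum_filter]

lemma pos_of_mem_wordsOn {n : ℤ} {u : List ℤ} (h : u ∈ wordsOn (Finset.Icc 1 n)) :
    ∀ x ∈ u, 0 < x := by
  intro x hx
  rw [← List.mem_toFinset, (mem_wordsOn.1 h).2, Finset.mem_Icc] at hx
  omega

/-- Below an unsigned word all signed permutations are unsigned, so the type `B` ideal is the set
of words on `{1, …, n}` with bounded inversion set. -/
lemma FLamB_eq {w : List ℤ} (h0 : ∀ x ∈ w, 0 ≤ x) :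
    FLamB w = genF (Finset.Icc 1 (w.length : ℤ)) (InvF w) := by
  classical
  rw [genF_eq_filter, FLamB, ← finsum_mem_coe_finset]
  refine finsum_mem_congr ?_ ?_
  · ext u
    simp only [Set.mem_ofPred_eq, Finset.coe_filter, leB, nonneg_iff.2 h0, Finset.subset_empty,
      Finset.coe_subset]
    constructor
    · rintro ⟨h1, h2, h3, h4, -⟩
      rw [← h1]
      exact ⟨(isSignedPerm_iff (nonneg_iff.1 h4)).1 h2, h3⟩
    · rintro ⟨h1, h2⟩
      have hl := length_of_mem h1
      have hp : ∀ x ∈ u, 0 ≤ x := fun x hx => (pos_of_mem_wordsOn h1 x hx).le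
      have hl' : u.length = w.length := by simpa using hl
      refine ⟨hl', (isSignedPerm_iff hp).2 (by rwa [hl']), h2, nonneg_iff.2 hp, ?_⟩
      rw [NspF_eq_empty hp]
      exact Finset.empty_subset _
  · intro u hu
    have hp : ∀ x ∈ u, 0 ≤ x := fun x hx =>
      (pos_of_mem_wordsOn (Finset.mem_filter.1 (Finset.mem_coe.1 hu)).1 x hx).le
    simp [lenB, NspF_eq_empty hp, nonneg_iff.2 hp]

lemma FLamS_eq (w : List ℤ) :
    FLamS w = genF (Finset.Icc 1 (w.length : ℤ)) (InvF w) := by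
  classical
  rw [genF_eq_filter, FLamS, ← finsum_mem_coe_finset]
  refine finsum_mem_congr ?_ fun u _ => rfl
  ext u
  simp only [Set.mem_ofPred_eq, Finset.coe_filter, leS, IsPermW, Finset.coe_subset]
  constructor
  · rintro ⟨h1, ⟨h2, h4⟩, h3⟩
    rw [← h1]
    exact ⟨(isSignedPerm_iff fun x hx => (h4 x hx).le).1 h2, h3⟩
  · rintro ⟨h1, h2⟩
    have hl := length_of_mem h1
    have hl' : u.length = w.length := by simpa using hl
    have hp := pos_of_mem_wordsOn h1
    exact ⟨hl', ⟨(isSignedPerm_iff fun x hx => (hp x hx).le).2 (by rwa [hl']), hp⟩, h2⟩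

lemma st_pos {a : List ℤ} : ∀ x ∈ st a, 0 < x := by
  intro x hx
  obtain ⟨y, -, rfl⟩ := List.mem_map.1 hx
  omega

lemma length_st (a : List ℤ) : (st a).length = a.length := by simp [st]

/-! ### Direct and skew sums -/

/-- The two restrictions of the constraint `InvF (a ++ b)` occurring in `genF_split`. -/
lemma genF_left {S W : Finset ℤ} {a b : List ℤ} (hS : S.card = a.length) (hW : W.card = a.length) :
    genF S (InvF (a ++ b)) = genF W (InvF a) := by
  rw [genF_eq_of_card (hS.trans hW.symm)]
  apply genF_congr
  intro i j h1 h2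
  rw [Finset.mem_coe, Finset.mem_coe, mem_InvF, mem_InvF, append_left' (by omega),
    append_left' (by omega), List.length_append]
  refine and_congr_right fun _ => ⟨fun h => ⟨by omega, h.2⟩, fun h => ⟨by omega, h.2⟩⟩

lemma genF_right {S W : Finset ℤ} {a b : List ℤ} (hS : S.card = b.length) (hW : W.card = b.length) :
    genF S {x | (x.1 + a.length, x.2 + a.length) ∈ (InvF (a ++ b) : Set (ℕ × ℕ))} =
      genF W (InvF b) := by
  rw [genF_eq_of_card (hS.trans hW.symm)]
  apply genF_congr
  intro i j h1 h2
  rw [Set.mem_ofPred_eq, Finset.mem_coe, Finset.mem_coe, mem_InvF, mem_InvF, append_right',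
    append_right', List.length_append]
  constructor
  · rintro ⟨_, _, h⟩; exact ⟨by omega, by omega, h⟩
  · rintro ⟨_, _, h⟩; exact ⟨by omega, by omega, h⟩

/-- If the distinct letters of `a` lie in a set of size `a.length`, they fill it, so no letter of
the complementary piece `b` lies in it. -/
lemma fill {a b : List ℤ} (h : (a ++ b).Nodup) {T : Finset ℤ} (ha : ∀ x ∈ a, x ∈ T)
    (hT : T.card = a.length) : ∀ y ∈ b, y ∉ T := by
  have hT' : a.toFinset = T := by
    refine Finset.eq_of_subset_of_card_le (fun x hx => ha x (by simpa using hx)) ?_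
    rw [List.toFinset_card_of_nodup h.of_append_left, hT]
  intro y hy hyT
  rw [← hT', List.mem_toFinset] at hyT
  exact List.disjoint_of_nodup_append h hyT hy

/-- If all letters of `a` compare the same way to all letters of `b`, then `InvF (a ++ b)` satisfies
the uniformity hypothesis of `genF_split`. -/
lemma split_const {a b : List ℤ} {c : Prop} (h : ∀ x ∈ a, ∀ y ∈ b, (y < x ↔ c)) :
    ∀ i j, i < a.length → a.length ≤ j → j < a.length + b.length →
      ((i, j) ∈ (InvF (a ++ b) : Set (ℕ × ℕ)) ↔ c) := by
  intro i j h1 h2 h3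
  obtain ⟨j, rfl⟩ := Nat.exists_eq_add_of_le' h2
  rw [Finset.mem_coe, mem_InvF, append_left' h1, append_right', List.length_append,
    h _ (getElem!_mem' h1) _ (getElem!_mem' (by omega : j < b.length))]
  exact ⟨fun h => h.2.2, fun h => ⟨by omega, by omega, h⟩⟩

lemma card_Icc_one (n : ℕ) : (Finset.Icc 1 (n : ℤ)).card = n := by simp

/-- Direct sums: a word below `a ++ b` has no inversion across the cut, so its first piece uses
exactly the smallest letters. -/
lemma genF_direct {a b : List ℤ} (h : ∀ x ∈ a, ∀ y ∈ b, x < y) :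
    genF (Finset.Icc 1 ((a ++ b).length : ℤ)) (InvF (a ++ b)) =
      genF (Finset.Icc 1 (a.length : ℤ)) (InvF a) * genF (Finset.Icc 1 (b.length : ℤ)) (InvF b) := by
  have hc := card_Icc_one (a ++ b).length
  rw [List.length_append] at hc ⊢
  have hsub : Finset.Icc 1 (a.length : ℤ) ⊆ Finset.Icc 1 ((a.length + b.length : ℕ) : ℤ) := by
    intro x hx
    rw [Finset.mem_Icc] at *
    omega
  rw [genF_split _ a.length (by omega) _ False (by
    rw [hc]
    exact split_const fun x hx y hy => by simpa using (h x hx y hy).le)]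
  rw [Finset.sum_eq_single (Finset.Icc 1 (a.length : ℤ))]
  · have hz : crossInv (Finset.Icc 1 (a.length : ℤ))
        (Finset.Icc 1 ((a.length + b.length : ℕ) : ℤ) \ Finset.Icc 1 (a.length : ℤ)) = 0 := by
      rw [crossInv, Finset.card_eq_zero, Finset.filter_eq_empty_iff]
      rintro ⟨x, y⟩ hxy
      simp only [Finset.mem_product, Finset.mem_sdiff, Finset.mem_Icc] at hxy ⊢
      omega
    rw [hz, genF_left (card_Icc_one _) (card_Icc_one _), genF_right _ (card_Icc_one _)]
    · simp
    · rw [Finset.card_sdiff_of_subset hsub, hc, card_Icc_one]; omega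
  · intro S hS hne
    rw [Finset.mem_powersetCard] at hS
    rw [if_neg, zero_mul]
    rintro (h | h)
    · exact h
    -- a `p`-subset with no cross inversions is an initial segment, hence `{1, …, p}`
    apply hne
    rw [crossInv, Finset.card_eq_zero, Finset.filter_eq_empty_iff] at h
    by_contra hne
    obtain ⟨t, ht1, ht2⟩ : ∃ t ∈ Finset.Icc 1 (a.length : ℤ), t ∉ S := by
      by_contra! hcon
      exact hne (Finset.eq_of_subset_of_card_le hcon (by rw [hS.2, card_Icc_one])).symm
    have hST : S ⊆ Finset.Icc 1 (a.length : ℤ) := by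
      intro s hs
      have h1 := @h (s, t) (Finset.mem_product.2
        ⟨hs, Finset.mem_sdiff.2 ⟨hsub ht1, ht2⟩⟩)
      have h2 := hS.1 hs
      rw [Finset.mem_Icc] at *
      simp only at h1
      omega
    exact hne (Finset.eq_of_subset_of_card_le hST (by rw [hS.2, card_Icc_one]))
  · intro hn
    exact absurd (Finset.mem_powersetCard.2 ⟨hsub, card_Icc_one _⟩) hn

/-- Skew sums. The choice of the set of leading letters contributes the same factor for every
constraint; comparison with the unconstrained sum identifies it as a Gaussian binomial. -/
lemma genF_skew {a b : List ℤ} (h : ∀ x ∈ a, ∀ y ∈ b, y < x) :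
    qfact a.length * qfact b.length *
        genF (Finset.Icc 1 ((a ++ b).length : ℤ)) (InvF (a ++ b)) =
      qfact (a.length + b.length) * genF (Finset.Icc 1 (a.length : ℤ)) (InvF a) *
        genF (Finset.Icc 1 (b.length : ℤ)) (InvF b) := by
  have hc := card_Icc_one (a ++ b).length
  rw [List.length_append] at hc ⊢
  set V := Finset.Icc 1 ((a.length + b.length : ℕ) : ℤ) with hV
  set G : ℚ[X] := ∑ S ∈ V.powersetCard a.length, X ^ crossInv S (V \ S) with hG
  have hS' : ∀ S ∈ V.powersetCard a.length, S.card = a.length ∧ (V \ S).card = b.length := by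
    intro S hS
    rw [Finset.mem_powersetCard] at hS
    rw [Finset.card_sdiff_of_subset hS.1]
    omega
  have h1 : genF V (InvF (a ++ b)) = G * (genF (Finset.Icc 1 (a.length : ℤ)) (InvF a) *
      genF (Finset.Icc 1 (b.length : ℤ)) (InvF b)) := by
    rw [genF_split V a.length (by omega) _ True (by
      rw [hc]
      exact split_const fun x hx y hy => by simpa using h x hx y hy), hG, Finset.sum_mul]
    refine Finset.sum_congr rfl fun S hS => ?_
    rw [genF_left (hS' S hS).1 (card_Icc_one _), genF_right (hS' S hS).2 (card_Icc_one _)]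
    simp
  have h2 : qfact (a.length + b.length) = G * (qfact a.length * qfact b.length) := by
    rw [← hc, ← genF_univ, genF_split V a.length (by omega) _ True (by simp), hG, Finset.sum_mul]
    refine Finset.sum_congr rfl fun S hS => ?_
    have : {x : ℕ × ℕ | (x.1 + a.length, x.2 + a.length) ∈ (Set.univ : Set (ℕ × ℕ))} =
      Set.univ := by ext; simp
    rw [this, genF_univ, genF_univ, (hS' S hS).1, (hS' S hS).2]
    simp
  rw [h1, h2]
  ring

/-- For `w ∈ K(B_n)` with no negative entries,
`F(Λ_w^B, q) = F(Λ_w^S, q)`; moreover `F(Λ_w^B, q)` factors over direct-sum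
decompositions, and over skew-sum decompositions with a Gaussian binomial factor
(stated in cross-multiplied form `[p]![n-p]! F(Λ_w^B) = [n]! F(Λ^B)F(Λ^B)`, which is
equivalent since `ℚ[q]` is a domain and `[p]!, [n-p]! ≠ 0`). -/
theorem FLamB_of_unsigned (n : ℕ) (w : List ℤ)
    (hw : w.length = n) (hsep : IsSepB w) (hneg : NegF w = ∅) :
    FLamB w = FLamS w ∧
    (∀ p, 1 ≤ p → p < n → w = oplus (w.take p) (st (w.drop p)) →
      FLamB w = FLamB (w.take p) * FLamB (st (w.drop p))) ∧
    (∀ p, 1 ≤ p → p < n → w = ominus (st (w.take p)) (w.drop p) →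
      qfact p * qfact (n - p) * FLamB w =
        qfact n * FLamB (st (w.take p)) * FLamB (w.drop p)) := by
  have h0 : ∀ x ∈ w, 0 ≤ x := nonneg_iff.1 hneg
  have hperm := (mem_wordsOn.1 ((isSignedPerm_iff h0).1 hsep.1))
  have hbd : ∀ x ∈ w, 1 ≤ x ∧ x ≤ (n : ℤ) := by
    intro x hx
    rwa [← List.mem_toFinset, hperm.2, Finset.mem_Icc, hw] at hx
  have hst : ∀ a : List ℤ, FLamB (st a) = genF (Finset.Icc 1 (a.length : ℤ)) (InvF a) := by
    intro a
    rw [FLamB_eq fun x hx => (st_pos x hx).le, InvF_st, length_st]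
  refine ⟨by rw [FLamB_eq h0, FLamS_eq], ?_, ?_⟩
  · intro p _ hp2 hdec
    have hnd : (w.drop p ++ w.take p).Nodup := by
      apply List.nodup_append_comm.1
      rw [List.take_append_drop]; exact hperm.1
    -- the trailing letters fill `{p + 1, …, n}`
    have hdrop : ∀ y ∈ w.drop p, y ∈ Finset.Icc ((p : ℤ) + 1) n := by
      intro y hy
      have hb := hbd y (List.mem_of_mem_drop hy)
      have he : w.drop p = (st (w.drop p)).map
          (fun x => x + x.sign * ((w.take p).length : ℤ)) := by
        conv_lhs => rw [hdec, oplus]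
        exact List.drop_left' (by rw [List.length_take]; omega)
      rw [he, List.mem_map] at hy
      obtain ⟨x, hx, rfl⟩ := hy
      have hx := st_pos x hx
      rw [Int.sign_eq_one_of_pos hx, List.length_take, Nat.min_eq_left (by omega)] at *
      rw [Finset.mem_Icc]
      omega
    have htake := fill hnd hdrop (by rw [List.length_drop, Int.card_Icc]; omega)
    have key := genF_direct (a := w.take p) (b := w.drop p) (by
      intro x hx y hy
      have h1 := htake x hx
      have h2 := hdrop y hy
      have h3 := hbd x (List.mem_of_mem_take hx)
      rw [Finset.mem_Icc] at h1 h2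
      omega)
    rw [List.take_append_drop] at key
    rw [FLamB_eq h0, key, hst, FLamB_eq fun x hx => h0 x (List.mem_of_mem_take hx)]
  · intro p _ hp2 hdec
    have hnd : (w.take p ++ w.drop p).Nodup := by
      rw [List.take_append_drop]; exact hperm.1
    -- the leading letters fill `{n - p + 1, …, n}`
    have htake : ∀ y ∈ w.take p, y ∈ Finset.Icc ((n - p : ℕ) + 1 : ℤ) n := by
      intro y hy
      have hb := hbd y (List.mem_of_mem_take hy)
      have he : w.take p = (st (w.take p)).map
          (fun x => x + x.sign * ((w.drop p).length : ℤ)) := by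
        conv_lhs => rw [hdec, ominus]
        exact List.take_left' (by rw [List.length_map, length_st, List.length_take]; omega)
      rw [he, List.mem_map] at hy
      obtain ⟨x, hx, rfl⟩ := hy
      have hx := st_pos x hx
      rw [Int.sign_eq_one_of_pos hx, List.length_drop, hw] at *
      rw [Finset.mem_Icc]
      omega
    have hdrop := fill hnd htake (by rw [List.length_take, Int.card_Icc]; omega)
    have key := genF_skew (a := w.take p) (b := w.drop p) (by
      intro x hx y hy
      have h1 := htake x hx
      have h2 := hdrop y hy
      have h3 := hbd y (List.mem_of_mem_drop hy)
      rw [Finset.mem_Icc] at h1 h2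
      omega)
    have hl1 : (w.take p).length = p := by rw [List.length_take]; omega
    have hl2 : (w.drop p).length = n - p := by rw [List.length_drop]; omega
    have hl3 : p + (n - p) = n := by omega
    rw [List.take_append_drop] at key
    rw [FLamB_eq h0, hst, FLamB_eq fun x hx => h0 x (List.mem_of_mem_drop hx)]
    rw [hl1, hl2, hl3] at key
    rwa [hl1, hl2]

end

end SepPaperFormal
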